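/- arXiv:2310.16674 — 4 statements merged into one kernel-verified Lean document; each statement's English description precedes it below -/
import Mathlib

section
/- For every integer m ≥ 1 and α ∈ ℝ, and every x ∈ ℝ, L̂^{(III,m−1)}_m(x²; α) = (−1)^m L_m^{(−α−1)}(−x²). -/
open Finset Filter Topology

/-- Monic Laguerre polynomial `L_n^{(α)}(x)`. -/
noncomputable def lagP (n : ℕ) (α x : ℝ) : ℝ :=
  ∑ k ∈ Finset.range (n + 1),
    (-1 : ℝ) ^ (n - k) * ((n.factorial : ℝ) / (k.factorial : ℝ)) *
      ((∏ j ∈ Finset.Icc (k + 1) n, (α + (j : ℝ))) / ((n - k).factorial : ℝ)) * x ^ k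

/-- Pochhammer symbol `(a)_n = a (a+1) ⋯ (a+n−1)`. -/
noncomputable def poch (a : ℝ) (n : ℕ) : ℝ := ∏ j ∈ Finset.range n, (a + (j : ℝ))

/-- Monic Jacobi polynomial `P_n^{(α,β)}(x)`. -/
noncomputable def jacP (n : ℕ) (α β x : ℝ) : ℝ :=
  (2 ^ n * (n.factorial : ℝ) / poch ((n : ℝ) + α + β + 1) n) *
    ∑ s ∈ Finset.range (n + 1),
      ((∏ j ∈ Finset.Icc (s + 1) n, (α + (j : ℝ))) / ((n - s).factorial : ℝ)) *
        ((∏ j ∈ Finset.Icc (n - s + 1) n, (β + (j : ℝ))) / (s.factorial : ℝ)) *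
        ((x - 1) / 2) ^ s * ((x + 1) / 2) ^ (n - s)

/-- Monic Hermite polynomial, as a polynomial function on `ℂ`. -/
noncomputable def hermC (n : ℕ) (z : ℂ) : ℂ :=
  ∑ k ∈ Finset.range (n / 2 + 1),
    (-1 : ℂ) ^ k *
      ((n.factorial : ℂ) / ((k.factorial : ℂ) * ((n - 2 * k).factorial : ℂ) * 4 ^ k)) *
      z ^ (n - 2 * k)

/-- Type I `X_m`-Laguerre exceptional orthogonal polynomial `L̂^{(I,m)}_n(x;α)`. -/
noncomputable def lagI (m n : ℕ) (α x : ℝ) : ℝ :=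
  (-1 : ℝ) ^ m * (lagP m (α + 1) (-x) * lagP n α x
    - (n : ℝ) * lagP m α (-x) * lagP (n - 1) (α + 1) x)

/-- Type II `X_m`-Laguerre exceptional orthogonal polynomial `L̂^{(II,m)}_n(x;α)`. -/
noncomputable def lagII (m n : ℕ) (α x : ℝ) : ℝ :=
  (1 / (α + (n : ℝ) - (m : ℝ))) *
    ((n : ℝ) * x * lagP m (-α) x * lagP (n - 1) (α + 1) x
      - ((m : ℝ) - α) * lagP m (-α - 1) x * lagP n α x)

/-- Type III `X_m`-Laguerre exceptional orthogonal polynomial `L̂^{(III,m)}_n(x;α)`. -/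
noncomputable def lagIII (m n : ℕ) (α x : ℝ) : ℝ :=
  if n = 0 then 1 else
    (-1 : ℝ) ^ m * (lagP m (-α) (-x) * lagP (n - m) (α - 1) x
      - (m : ℝ) * x * lagP (m - 1) (-α + 1) (-x) * lagP (n - m - 1) α x)

/-- Type I `X_m`-Jacobi exceptional orthogonal polynomial `P̂^{(I,m)}_n(x;α,β)`. -/
noncomputable def jacI (m n : ℕ) (α β x : ℝ) : ℝ :=
  (1 / (β + (n : ℝ) - (m : ℝ))) *
    (jacP m α (-β) x * ((n : ℝ) * (1 + x) * jacP (n - 1) (α + 1) (β + 1) x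
        + β * jacP n α β x)
      - (m : ℝ) * (1 + x) * jacP (m - 1) (α + 1) (-β + 1) x * jacP n α β x)

/-- Type II `X_m`-Jacobi exceptional orthogonal polynomial `P̂^{(II,m)}_n(x;α,β)`. -/
noncomputable def jacII (m n : ℕ) (α β x : ℝ) : ℝ :=
  (1 / ((m : ℝ) - (n : ℝ) - α)) *
    (jacP m (-α) β x * ((n : ℝ) * (1 - x) * jacP (n - 1) (α + 1) (β + 1) x
        - α * jacP n α β x)
      - (m : ℝ) * (1 - x) * jacP (m - 1) (-α + 1) (β + 1) x * jacP n α β x)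

/-- Type III `X_m`-Jacobi exceptional orthogonal polynomial `P̂^{(III,m)}_n(x;α,β)`. -/
noncomputable def jacIII (m n : ℕ) (α β x : ℝ) : ℝ :=
  if n = 0 then 1 else
    (1 / (α + β + (n : ℝ) - 2 * (m : ℝ) - 1)) *
      ((α + β + (n : ℝ) - (m : ℝ) - 1) * jacP m (-α) (-β) x * jacP (n - m) (α - 1) (β - 1) x
        + (m : ℝ) * (1 - x ^ 2) * jacP (m - 1) (-α + 1) (-β + 1) x * jacP (n - m - 1) α β x)

/-- Type III `X_m`-Hermite exceptional orthogonal polynomial `Ĥ^{(III,m)}_n(x)`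
(a real polynomial, expressed via complex Hermite values). -/
noncomputable def hermIII (m n : ℕ) (x : ℝ) : ℂ :=
  if n = 0 then 1 else
    Complex.I ^ m * (hermC m (Complex.I * x) * hermC (n - m) (x : ℂ)
      + Complex.I * ((m : ℂ) / 2) * hermC (m - 1) (Complex.I * x) * hermC (n - m - 1) (x : ℂ))

/-!
The proof rests on the two classical contiguous relations for monic Laguerre polynomials,
`L_{n+1}^{(a)} = L_{n+1}^{(a+1)} + (n+1) L_n^{(a+1)}` and
`z L_n^{(a+1)} = L_{n+1}^{(a)} + (a+n+1) L_n^{(a)}`,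
each a comparison of coefficients. Eliminating between them gives the raising relation
`L_{n+1}^{(a-1)}(z) = (z - a) L_n^{(a)}(z) - n z L_{n-1}^{(a+1)}(z)`. In `L̂^{(III,n)}_{n+1}(y; α)`
the polynomials in `y` have degrees `1` and `0`, so it is, up to sign, the right-hand side of the
raising relation at `a = -α`, `z = -y`.
-/

/-- The coefficient of `x ^ k` in the monic Laguerre polynomial `L_n^{(a)}(x)`, written with a
binomial coefficient so that it vanishes for `k > n`. -/
noncomputable def lagCoeff (n k : ℕ) (a : ℝ) : ℝ :=
  (-1) ^ (n - k) * n.choose k * ∏ j ∈ Icc (k + 1) n, (a + j)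

lemma lagCoeff_eq_zero_of_lt {n k : ℕ} (h : n < k) (a : ℝ) : lagCoeff n k a = 0 := by
  simp [lagCoeff, Nat.choose_eq_zero_of_lt h]

lemma lagCoeff_self (n : ℕ) (a : ℝ) : lagCoeff n n a = 1 := by
  simp [lagCoeff]

lemma lagP_eq_sum_lagCoeff {n N : ℕ} (h : n < N) (a z : ℝ) :
    lagP n a z = ∑ k ∈ range N, lagCoeff n k a * z ^ k := by
  have hsub : range (n + 1) ⊆ range N := range_mono h
  rw [← sum_subset hsub fun k _ hk ↦ by
    rw [lagCoeff_eq_zero_of_lt (by simpa [Nat.lt_succ_iff] using hk), zero_mul]]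
  refine sum_congr rfl fun k hk ↦ ?_
  rw [lagCoeff, Nat.cast_choose ℝ (mem_range_succ_iff.mp hk)]
  ring

lemma lagP_zero (a z : ℝ) : lagP 0 a z = 1 := by
  simp [lagP]

lemma lagP_one (a z : ℝ) : lagP 1 a z = z - (a + 1) := by
  rw [sub_eq_neg_add]
  simp [lagP, sum_range_succ]

lemma prod_Icc_succ_succ {M : Type*} [CommMonoid M] (f : ℕ → M) (k n : ℕ) :
    ∏ j ∈ Icc (k + 1) (n + 1), f j = ∏ j ∈ Icc k n, f (j + 1) := by
  rw [← map_add_right_Icc, prod_map]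
  rfl

lemma prod_Icc_succ_succ_add_natCast (k n : ℕ) (a : ℝ) :
    ∏ j ∈ Icc (k + 1) (n + 1), (a + j) = ∏ j ∈ Icc k n, (a + 1 + j) := by
  rw [prod_Icc_succ_succ]
  exact prod_congr rfl fun j _ ↦ by push_cast; ring

lemma lagCoeff_succ_eq_add_one_param (n k : ℕ) (a : ℝ) :
    lagCoeff (n + 1) k a = lagCoeff (n + 1) k (a + 1) + (n + 1) * lagCoeff n k (a + 1) := by
  rcases lt_trichotomy k (n + 1) with hk | rfl | hk
  · have hkn : k ≤ n := Nat.le_of_lt_succ hk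
    have hbot : ∏ j ∈ Icc (k + 1) (n + 1), (a + j)
        = (a + k + 1) * ∏ j ∈ Icc (k + 1) n, (a + 1 + j) := by
      rw [prod_Icc_succ_succ_add_natCast, ← mul_prod_Ioc_eq_prod_Icc hkn, Icc_add_one_left_eq_Ioc]
      ring
    have hchoose : (n.choose k : ℝ) * (n + 1) = (n + 1).choose k * (n + 1 - k) := by
      have h := congrArg (Nat.cast (R := ℝ)) (Nat.choose_mul_succ_eq n k)
      rwa [Nat.cast_mul, Nat.cast_mul, Nat.cast_sub hk.le, Nat.cast_succ] at h
    simp only [lagCoeff]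
    rw [hbot, prod_Icc_succ_top (by lia), Nat.sub_add_comm hkn, pow_succ]
    push_cast
    linear_combination (-(-1) ^ (n - k) * ∏ j ∈ Icc (k + 1) n, (a + 1 + (j : ℝ))) * hchoose
  · rw [lagCoeff_self, lagCoeff_self, lagCoeff_eq_zero_of_lt n.lt_succ_self, mul_zero, add_zero]
  · rw [lagCoeff_eq_zero_of_lt hk, lagCoeff_eq_zero_of_lt hk,
      lagCoeff_eq_zero_of_lt (by lia), mul_zero, add_zero]

lemma lagCoeff_succ_zero (n : ℕ) (a : ℝ) :
    lagCoeff (n + 1) 0 a = -(a + n + 1) * lagCoeff n 0 a := by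
  simp only [lagCoeff, Nat.sub_zero, Nat.choose_zero_right]
  rw [prod_Icc_succ_top (by lia), pow_succ]
  push_cast
  ring

lemma lagCoeff_add_one_param {n k : ℕ} (hk : k ≤ n) (a : ℝ) :
    lagCoeff n k (a + 1) = lagCoeff (n + 1) (k + 1) a + (a + n + 1) * lagCoeff n (k + 1) a := by
  rcases hk.eq_or_lt with rfl | hlt
  · rw [lagCoeff_self, lagCoeff_self, lagCoeff_eq_zero_of_lt k.lt_succ_self, mul_zero, add_zero]
  · have hsign : (-1 : ℝ) ^ (n - k) = -(-1) ^ (n - (k + 1)) := by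
      rw [show n - k = n - (k + 1) + 1 by lia, pow_succ, mul_neg_one]
    simp only [lagCoeff]
    rw [← prod_Icc_succ_succ_add_natCast, prod_Icc_succ_top (by lia), Nat.add_sub_add_right,
      hsign, Nat.choose_succ_succ]
    push_cast
    ring

lemma lagP_succ_eq_add_one_param (n : ℕ) (a z : ℝ) :
    lagP (n + 1) a z = lagP (n + 1) (a + 1) z + (n + 1) * lagP n (a + 1) z := by
  rw [lagP_eq_sum_lagCoeff (N := n + 2) (by lia), lagP_eq_sum_lagCoeff (N := n + 2) (by lia),
    lagP_eq_sum_lagCoeff (N := n + 2) (by lia), mul_sum, ← sum_add_distrib]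
  refine sum_congr rfl fun k _ ↦ ?_
  rw [lagCoeff_succ_eq_add_one_param]
  ring

lemma mul_lagP_add_one_param (n : ℕ) (a z : ℝ) :
    z * lagP n (a + 1) z = lagP (n + 1) a z + (a + n + 1) * lagP n a z := by
  have hsum : z * lagP n (a + 1) z
      = ∑ k ∈ range (n + 1), lagCoeff (n + 1) (k + 1) a * z ^ (k + 1)
        + (a + n + 1) * ∑ k ∈ range (n + 1), lagCoeff n (k + 1) a * z ^ (k + 1) := by
    rw [lagP_eq_sum_lagCoeff n.lt_succ_self, mul_sum, mul_sum, ← sum_add_distrib]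
    refine sum_congr rfl fun k hk ↦ ?_
    rw [lagCoeff_add_one_param (mem_range_succ_iff.mp hk)]
    ring
  rw [hsum, lagP_eq_sum_lagCoeff (n + 1).lt_succ_self, lagP_eq_sum_lagCoeff (N := n + 2) (by lia),
    sum_range_succ' _ (n + 1), sum_range_succ' _ (n + 1), lagCoeff_succ_zero]
  ring

-- At `n = 0` the truncated index `n - 1` is harmless, its term carrying the factor `n`.
lemma lagP_succ_sub_one_param (n : ℕ) (a z : ℝ) :
    lagP (n + 1) (a - 1) z = (z - a) * lagP n a z - n * z * lagP (n - 1) (a + 1) z := by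
  have hlower : n * lagP (n - 1) (a + 1) z = lagP n a z - lagP n (a + 1) z := by
    cases n with
    | zero => simp [lagP_zero]
    | succ n =>
      rw [lagP_succ_eq_add_one_param n a, Nat.add_sub_cancel]
      push_cast
      ring
  have hraise : lagP (n + 1) (a - 1) z = lagP (n + 1) a z + (n + 1) * lagP n a z := by
    rw [lagP_succ_eq_add_one_param, sub_add_cancel]
  linear_combination hraise - mul_lagP_add_one_param n a z + z * hlower

theorem stmt13_general (n : ℕ) (α y : ℝ) :
    lagIII n (n + 1) α y = (-1) ^ (n + 1) * lagP (n + 1) (-α - 1) (-y) := by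
  rw [lagIII, if_neg n.succ_ne_zero, Nat.add_sub_cancel_left, Nat.sub_self, lagP_one, lagP_zero,
    lagP_succ_sub_one_param]
  ring

theorem stmt13 (m : ℕ) (hm : 1 ≤ m) (α x : ℝ) :
    lagIII (m - 1) m α (x ^ 2) = (-1 : ℝ) ^ m * lagP m (-α - 1) (-x ^ 2) := by
  obtain ⟨n, rfl⟩ := Nat.exists_eq_add_of_le' hm
  exact stmt13_general n α (x ^ 2)
end

section
/- For every integer k ≥ 1, every α ∈ ℝ, and every x ∈ ℝ, the monic Laguerre polynomials satisfy L_{k+1}^{(α−1)}(x) + (α − x) L_k^{(α)}(x) = −k x L_{k−1}^{(α+1)}(x). -/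
open Finset Filter Topology

/-!
Two contiguous relations, both read off the coefficients with Pascal-type identities,
`L_{n+1}^{(α)} = L_{n+1}^{(α+1)} + (n+1) L_n^{(α+1)}` and
`X L_n^{(α+1)} = L_{n+1}^{(α)} + (α+n+1) L_n^{(α)}`,
express every term of the identity through `L_k^{(α)}` and `L_{k-1}^{(α)}`.
-/

open Polynomial

section MonicLaguerre

variable {R : Type*} [CommRing R]

/-- The monic Laguerre polynomial `L_n^{(α)}` over a commutative ring. Writing its coefficients with
`n.choose k` in place of `n! / (k! (n - k)!)` avoids division and makes them vanish for `k > n`;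
the sign is `(-1) ^ (n + k)` so that no subtraction of naturals occurs. -/
noncomputable def monicLaguerre (n : ℕ) (α : R) : R[X] :=
  ∑ k ∈ range (n + 1),
    C ((-1) ^ (n + k) * (n.choose k : R) * ∏ j ∈ Icc (k + 1) n, (α + (j : R))) * X ^ k

theorem coeff_monicLaguerre (n : ℕ) (α : R) (k : ℕ) :
    (monicLaguerre n α).coeff k =
      (-1) ^ (n + k) * (n.choose k : R) * ∏ j ∈ Icc (k + 1) n, (α + (j : R)) := by
  simp only [monicLaguerre, finsetSum_coeff, coeff_C_mul_X_pow, sum_ite_eq, mem_range]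
  split_ifs with hk
  · rfl
  · simp [Nat.choose_eq_zero_of_lt (show n < k by lia)]

theorem prod_Icc_add_one_add_cast (α : R) (m n : ℕ) :
    ∏ j ∈ Icc m n, (α + 1 + (j : R)) = ∏ j ∈ Icc (m + 1) (n + 1), (α + (j : R)) := by
  rw [← map_add_right_Icc m n 1, prod_map]
  refine prod_congr rfl fun j _ => ?_
  rw [addRightEmbedding_apply, Nat.cast_add_one]
  ring

theorem monicLaguerre_succ_eq_add (n : ℕ) (α : R) :
    monicLaguerre (n + 1) α =
      monicLaguerre (n + 1) (α + 1) + C ((n : R) + 1) * monicLaguerre n (α + 1) := by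
  ext k
  simp only [coeff_add, coeff_C_mul, coeff_monicLaguerre, prod_Icc_add_one_add_cast]
  rcases le_or_gt k n with hk | hk
  · have split_bottom : ∏ j ∈ Icc (k + 1) (n + 1), (α + (j : R)) =
        (α + k + 1) * ∏ j ∈ Icc (k + 1 + 1) (n + 1), (α + (j : R)) := by
      rw [← insert_Icc_add_one_left_eq_Icc (by lia), prod_insert (by simp)]
      push_cast
      ring
    have split_top : ∏ j ∈ Icc (k + 1 + 1) (n + 1 + 1), (α + (j : R)) =
        (∏ j ∈ Icc (k + 1 + 1) (n + 1), (α + (j : R))) * (α + n + 2) := by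
      rw [prod_Icc_succ_top (by lia)]
      push_cast
      ring
    have choose_absorb : (n.choose k : R) * (n + 1) = ((n + 1).choose k : R) * (n + 1 - k) := by
      have := congrArg (Nat.cast (R := R)) (Nat.choose_mul_succ_eq n k)
      rwa [Nat.cast_mul, Nat.cast_mul, Nat.cast_sub (by lia), Nat.cast_add_one] at this
    rw [split_bottom, split_top]
    linear_combination (-(-1) ^ (n + k) * ∏ j ∈ Icc (k + 1 + 1) (n + 1), (α + (j : R))) *
      choose_absorb
  · simp [Nat.choose_eq_zero_of_lt hk, Icc_eq_empty_of_lt, hk]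

theorem X_mul_monicLaguerre_add_one (n : ℕ) (α : R) :
    X * monicLaguerre n (α + 1) =
      monicLaguerre (n + 1) α + C (α + n + 1) * monicLaguerre n α := by
  ext k
  rw [coeff_add, coeff_C_mul]
  cases k with
  | zero =>
    simp only [coeff_X_mul_zero, coeff_monicLaguerre, Nat.choose_zero_right,
      prod_Icc_succ_top (show 0 + 1 ≤ n + 1 by lia), Nat.cast_add_one]
    ring
  | succ k =>
    simp only [coeff_X_mul, coeff_monicLaguerre, prod_Icc_add_one_add_cast,
      Nat.choose_succ_succ', Nat.cast_add]
    rcases lt_or_ge k n with hk | hk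
    · rw [prod_Icc_succ_top (by lia), Nat.cast_add_one]
      ring
    · rw [Nat.choose_eq_zero_of_lt (show n < k + 1 by lia),
        Icc_eq_empty_of_lt (show n + 1 < k + 1 + 1 by lia)]
      simp only [Nat.cast_zero]
      ring

theorem stmt14_general (k : ℕ) (α : R) :
    monicLaguerre (k + 2) (α - 1) + (C α - X) * monicLaguerre (k + 1) α =
      -C ((k : R) + 1) * X * monicLaguerre k (α + 1) := by
  have lower_param : monicLaguerre (k + 1) (α - 1) =
      monicLaguerre (k + 1) α + C ((k : R) + 1) * monicLaguerre k α := by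
    simpa only [sub_add_cancel] using monicLaguerre_succ_eq_add k (α - 1)
  have raise_degree : X * monicLaguerre (k + 1) α =
      monicLaguerre (k + 2) (α - 1) + C (α + k + 1) * monicLaguerre (k + 1) (α - 1) := by
    convert X_mul_monicLaguerre_add_one (k + 1) (α - 1) using 4 <;> push_cast <;> ring
  have lower_degree : X * monicLaguerre k (α + 1) =
      monicLaguerre (k + 1) α + C (α + k + 1) * monicLaguerre k α :=
    X_mul_monicLaguerre_add_one k α
  simp only [C_add, C_1] at lower_param raise_degree lower_degree ⊢
  linear_combination (-(C α + C (k : R) + 1)) * lower_param - raise_degree +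
    (C (k : R) + 1) * lower_degree

end MonicLaguerre

theorem eval_monicLaguerre (n : ℕ) (α x : ℝ) : (monicLaguerre n α).eval x = lagP n α x := by
  simp only [monicLaguerre, lagP, eval_finsetSum, eval_mul, eval_C, eval_pow, eval_X]
  refine sum_congr rfl fun k hk => ?_
  have hkn : k ≤ n := mem_range_succ_iff.mp hk
  have neg_one_pow : (-1 : ℝ) ^ (n + k) = (-1) ^ (n - k) := by
    rw [show n + k = n - k + 2 * k by lia, pow_add, pow_mul, neg_one_sq, one_pow, mul_one]
  rw [neg_one_pow, Nat.cast_choose ℝ hkn]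
  ring

theorem stmt14 (k : ℕ) (hk : 1 ≤ k) (α x : ℝ) :
    lagP (k + 1) (α - 1) x + (α - x) * lagP k α x = -(k : ℝ) * x * lagP (k - 1) (α + 1) x := by
  obtain ⟨m, rfl⟩ := Nat.exists_eq_add_of_le' hk
  simpa [eval_monicLaguerre] using congrArg (eval x) (stmt14_general m α)
end

section
/- Let n ∈ ℕ and α ∈ ℝ. For every x ∈ ℝ, lim_{β→∞} β^n P_n^{(α,−β)}(1 − 2x/β) = 2^n L_n^{(α)}(−x), the limit being taken along real β → +∞ (for all sufficiently large β the monic Jacobi polynomial P_n^{(α,−β)} is defined). -/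
open Finset Filter Topology

/-!
After multiplication by `γ ^ n`, the normalising factor of `P_n^{(α,γ)}` tends to `2 ^ n * n!`,
while the point `1 - 2 * x / γ` contributes `(-x / γ) ^ s` to the `s`-th summand, which exactly
balances the growth `γ ^ s` of the binomial coefficient `C(n + γ, s)`. Hence each summand converges
as `|γ| → ∞`, and the limits are, up to sign, the summands of `L_n^{(α)}(x)`. The substitution
`γ = -β`, `x ↦ -x` gives the limit for `P_n^{(α,-β)}`.
-/

open Bornology

section NormedDivisionRing

variable {𝕜 : Type*} [NormedDivisionRing 𝕜]

theorem tendsto_const_div_cobounded (c : 𝕜) :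
    Tendsto (fun b : 𝕜 => c / b) (cobounded 𝕜) (𝓝 0) := by
  simpa only [div_eq_mul_inv, mul_zero] using tendsto_inv₀_cobounded.const_mul c

theorem tendsto_add_const_div_self_cobounded (c : 𝕜) :
    Tendsto (fun b : 𝕜 => (b + c) / b) (cobounded 𝕜) (𝓝 1) := by
  have one_add_lim : Tendsto (fun b : 𝕜 => 1 + c / b) (cobounded 𝕜) (𝓝 1) := by
    simpa only [add_zero] using (tendsto_const_div_cobounded c).const_add 1
  refine one_add_lim.congr' ?_
  filter_upwards [eventually_ne_cobounded 0] with b hb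
  rw [add_div, div_self hb]

end NormedDivisionRing

theorem tendsto_prod_add_const_div_pow_card_cobounded {𝕜 ι : Type*} [NormedField 𝕜]
    (s : Finset ι) (c : ι → 𝕜) :
    Tendsto (fun b : 𝕜 => (∏ i ∈ s, (b + c i)) / b ^ #s) (cobounded 𝕜) (𝓝 1) := by
  simpa only [Finset.prod_div_distrib, Finset.prod_const, one_pow] using
    tendsto_finsetProd s fun i _ => tendsto_add_const_div_self_cobounded (c i)

theorem tendsto_pow_div_poch_cobounded (c : ℝ) (n : ℕ) :
    Tendsto (fun γ : ℝ => γ ^ n / poch (γ + c) n) (cobounded ℝ) (𝓝 1) := by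
  have poch_div_pow_lim := tendsto_prod_add_const_div_pow_card_cobounded
    (range n) fun j => c + (j : ℝ)
  simpa only [poch, card_range, inv_div, inv_one, add_assoc] using
    poch_div_pow_lim.inv₀ one_ne_zero

theorem tendsto_prod_Icc_add_div_pow_cobounded {n s : ℕ} (hs : s ≤ n) :
    Tendsto (fun γ : ℝ => (∏ j ∈ Icc (n - s + 1) n, (γ + (j : ℝ))) / γ ^ s)
      (cobounded ℝ) (𝓝 1) := by
  have card_eq : #(Icc (n - s + 1) n) = s := by rw [Nat.card_Icc]; omega
  simpa only [card_eq] using tendsto_prod_add_const_div_pow_card_cobounded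
    (Icc (n - s + 1) n) fun j => (j : ℝ)

theorem tendsto_jacP_summand_cobounded {n s : ℕ} (hs : s ≤ n) (a x : ℝ) :
    Tendsto (fun γ : ℝ => a * ((∏ j ∈ Icc (n - s + 1) n, (γ + (j : ℝ))) / (s.factorial : ℝ)) *
        ((1 - 2 * x / γ - 1) / 2) ^ s * ((1 - 2 * x / γ + 1) / 2) ^ (n - s))
      (cobounded ℝ) (𝓝 (a * ((-x) ^ s / (s.factorial : ℝ)))) := by
  have one_sub_lim : Tendsto (fun γ : ℝ => 1 - x / γ) (cobounded ℝ) (𝓝 1) := by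
    simpa only [sub_zero] using (tendsto_const_div_cobounded x).const_sub 1
  have rescaled_lim := ((tendsto_prod_Icc_add_div_pow_cobounded hs).const_mul
    (a * ((-x) ^ s / (s.factorial : ℝ)))).mul (one_sub_lim.pow (n - s))
  rw [one_pow, mul_one, mul_one] at rescaled_lim
  refine rescaled_lim.congr fun γ => ?_
  have sub_one_half : (1 - 2 * x / γ - 1) / 2 = -x / γ := by ring
  have add_one_half : (1 - 2 * x / γ + 1) / 2 = 1 - x / γ := by ring
  rw [sub_one_half, add_one_half, div_pow]
  ring

theorem neg_one_pow_mul_lagP (n : ℕ) (α x : ℝ) :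
    (-1) ^ n * lagP n α x = (n.factorial : ℝ) * ∑ s ∈ range (n + 1),
      (∏ j ∈ Icc (s + 1) n, (α + (j : ℝ))) / ((n - s).factorial : ℝ) *
        ((-x) ^ s / (s.factorial : ℝ)) := by
  rw [lagP, mul_sum, mul_sum]
  refine sum_congr rfl fun s hs => ?_
  have sign_eq : (-1 : ℝ) ^ n * (-1) ^ (n - s) = (-1) ^ s := by
    rw [← pow_sub_mul_pow (-1 : ℝ) (mem_range_succ_iff.mp hs), mul_right_comm,
      pow_mul_pow_eq_one _ (by norm_num), one_mul]
  rw [neg_pow x s, ← sign_eq]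
  ring

theorem tendsto_pow_mul_jacP_cobounded (n : ℕ) (α x : ℝ) :
    Tendsto (fun γ : ℝ => γ ^ n * jacP n α γ (1 - 2 * x / γ)) (cobounded ℝ)
      (𝓝 ((-2) ^ n * lagP n α x)) := by
  have sum_lim := tendsto_finsetSum (range (n + 1)) fun s hs =>
    tendsto_jacP_summand_cobounded (mem_range_succ_iff.mp hs)
      ((∏ j ∈ Icc (s + 1) n, (α + (j : ℝ))) / ((n - s).factorial : ℝ)) x
  have product_lim := ((tendsto_pow_div_poch_cobounded (n + α + 1) n).const_mul
    (2 ^ n * (n.factorial : ℝ))).mul sum_lim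
  rw [mul_one, mul_assoc, ← neg_one_pow_mul_lagP, ← mul_assoc, ← mul_pow, mul_neg_one]
    at product_lim
  refine product_lim.congr fun γ => ?_
  have poch_arg : γ + (n + α + 1) = n + α + γ + 1 := by ring
  rw [jacP, poch_arg]
  ring

theorem stmt16_general (n : ℕ) (α x : ℝ) :
    Tendsto (fun β : ℝ => β ^ n * jacP n α (-β) (1 - 2 * x / β)) (cobounded ℝ)
      (𝓝 (2 ^ n * lagP n α (-x))) := by
  have neg_lim := ((tendsto_pow_mul_jacP_cobounded n α (-x)).comp
    tendsto_neg_cobounded).const_mul ((-1) ^ n)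
  simpa only [Function.comp_apply, ← mul_assoc, ← mul_pow, mul_neg, neg_one_mul, neg_neg,
    neg_div_neg_eq] using neg_lim

theorem stmt16 (n : ℕ) (α x : ℝ) :
    Filter.Tendsto (fun β : ℝ => β ^ n * jacP n α (-β) (1 - 2 * x / β)) Filter.atTop
      (nhds (2 ^ n * lagP n α (-x))) :=
  (stmt16_general n α x).mono_left IsOrderBornology.atTop_le_cobounded
end

section
/- Let n ∈ ℕ. For every x ∈ ℝ, lim_{α→∞} α^{n/2} P_n^{(−α,−α)}(x/√α) = (−i)^n H_n(ix) = Σ_{k=0}^{⌊n/2⌋} n!/(k!(n−2k)! 4^k) x^{n−2k}, the limit being taken along real α → +∞ (for all sufficiently large α the monic Jacobi polynomial P_n^{(−α,−α)} is defined); here H_n(ix) denotes the monic Hermite polynomial evaluated at ix in ℂ, and (−i)^n H_n(ix) is a real polynomial in x. -/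
open Finset Filter Topology

/-!
Everything rests on comparing coefficients of `Tⁿ` in
`(1 + uT)^y (1 + vT)^y = (1 + (u + v)T + uvT²)^y`.
At `y = n - α`, `u = (x - 1) / 2` and `v = (x + 1) / 2` the left-hand side is the sum defining the
Jacobi polynomial, whose terms cancel massively as `α → ∞`, while the right-hand side is a sum over
powers of `u + v = x` and `uv = (x² - 1) / 4`, in which each term has a limit after rescaling.
-/

section BinomialConvolution

open Polynomial

lemma coeff_C_add_C_mul_X_pow {R : Type*} [CommSemiring R] (a b : R) (m j : ℕ) :
    ((C a + C b * X : R[X]) ^ m).coeff j = m.choose j * a ^ (m - j) * b ^ j := by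
  have h : (C a + C b * X : R[X]) ^ m = ((X + C a) ^ m).comp (C b * X) := by simp [add_comm]
  rw [h, comp_C_mul_X_coeff, coeff_X_add_C_pow]
  ring

lemma sum_antidiagonal_choose_mul_choose {R : Type*} [CommSemiring R] (N n : ℕ) (u v : R) :
    ∑ p ∈ antidiagonal n, (N.choose p.1 * N.choose p.2 : R) * (u ^ p.1 * v ^ p.2) =
      ∑ p ∈ antidiagonal n,
        p.1.choose p.2 * (N.choose p.1 * ((u + v) ^ (p.1 - p.2) * (u * v) ^ p.2)) := by
  have hfactor : (C 1 + C u * X : R[X]) ^ N * (C 1 + C v * X) ^ N =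
      (X * (C (u + v) + C (u * v) * X) + 1) ^ N := by
    rw [← mul_pow]
    simp only [C_add, C_mul, C_1]
    ring
  calc
    _ = ((C 1 + C u * X : R[X]) ^ N * (C 1 + C v * X) ^ N).coeff n := by
      simp only [coeff_mul, coeff_C_add_C_mul_X_pow, one_pow]
      exact sum_congr rfl fun p _ => by ring
    _ = ∑ m ∈ range (N + 1) with m ≤ n, m.choose (n - m) *
          (N.choose m * ((u + v) ^ (m - (n - m)) * (u * v) ^ (n - m))) := by
      rw [hfactor, add_pow, finsetSum_coeff, sum_filter]
      refine sum_congr rfl fun m _ => ?_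
      rw [one_pow, mul_one, mul_pow, coeff_mul_natCast, coeff_X_pow_mul', coeff_C_add_C_mul_X_pow]
      split_ifs <;> ring
    _ = ∑ m ∈ range (n + 1), m.choose (n - m) *
          (N.choose m * ((u + v) ^ (m - (n - m)) * (u * v) ^ (n - m))) := by
      refine sum_subset (fun m hm => ?_) fun m hm hm' => ?_
      · simp only [mem_filter, mem_range] at hm ⊢
        omega
      · simp only [mem_filter, mem_range] at hm hm'
        simp [Nat.choose_eq_zero_of_lt (show N < m by omega)]
    _ = _ := by rw [Finset.Nat.sum_antidiagonal_eq_sum_range_succ_mk]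

variable {K : Type*} [Field K] [CharZero K]

lemma ringChoose_eq_eval (y : K) (m : ℕ) :
    Ring.choose y m = (C (m.factorial : K)⁻¹ * descPochhammer K m).eval y := by
  rw [Ring.choose_eq_smul, ← descPochhammer_map (Int.castRingHom K), eval_mul, eval_C,
    eval_map, ← eval₂_smulOneHom_eq_smeval, smul_eq_mul, RingHom.ext_int RingHom.smulOneHom]

lemma ringChoose_eq_prod_div_factorial (y : K) (m : ℕ) :
    Ring.choose y m = (∏ j ∈ range m, (y - j)) / m.factorial := by
  rw [ringChoose_eq_eval, eval_mul, eval_C, descPochhammer_eval_eq_prod_range, inv_mul_eq_div]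

lemma prod_Icc_div_factorial_eq_ringChoose (a : K) {s n : ℕ} (hs : s ≤ n) :
    (∏ j ∈ Icc (s + 1) n, (a + j)) / ((n - s).factorial : K) = Ring.choose (n + a) (n - s) := by
  rw [ringChoose_eq_prod_div_factorial, ← Ico_add_one_right_eq_Icc, prod_Ico_eq_prod_range,
    ← prod_range_reflect, show n + 1 - (s + 1) = n - s by omega]
  congr 1
  refine prod_congr rfl fun j hj => ?_
  rw [mem_range] at hj
  rw [show s + 1 + (n - s - 1 - j) = n - j by omega, Nat.cast_sub (by omega)]
  ring

-- Both sides are polynomials in `y`, so it is enough to compare them at natural numbers.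
lemma sum_antidiagonal_ringChoose_mul_ringChoose (y u v : K) (n : ℕ) :
    ∑ p ∈ antidiagonal n, (Ring.choose y p.1 * Ring.choose y p.2) * (u ^ p.1 * v ^ p.2) =
      ∑ p ∈ antidiagonal n,
        p.1.choose p.2 * (Ring.choose y p.1 * ((u + v) ^ (p.1 - p.2) * (u * v) ^ p.2)) := by
  let B (m : ℕ) : K[X] := C (m.factorial : K)⁻¹ * descPochhammer K m
  let L : K[X] := ∑ p ∈ antidiagonal n, (B p.1 * B p.2) * C (u ^ p.1 * v ^ p.2)
  let R : K[X] := ∑ p ∈ antidiagonal n,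
    C (p.1.choose p.2 : K) * (B p.1 * C ((u + v) ^ (p.1 - p.2) * (u * v) ^ p.2))
  have eval_L (z : K) : L.eval z = ∑ p ∈ antidiagonal n,
      (Ring.choose z p.1 * Ring.choose z p.2) * (u ^ p.1 * v ^ p.2) := by
    simp only [L, B, ringChoose_eq_eval, eval_finsetSum, eval_mul, eval_C]
  have eval_R (z : K) : R.eval z = ∑ p ∈ antidiagonal n,
      p.1.choose p.2 * (Ring.choose z p.1 * ((u + v) ^ (p.1 - p.2) * (u * v) ^ p.2)) := by
    simp only [R, B, ringChoose_eq_eval, eval_finsetSum, eval_mul, eval_C]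
  have L_eq_R : L = R := by
    refine eq_of_infinite_eval_eq L R
      ((Set.infinite_range_of_injective (Nat.cast_injective (R := K))).mono ?_)
    rintro _ ⟨N, rfl⟩
    rw [Set.mem_ofPred_eq, eval_L, eval_R]
    simp only [Ring.choose_natCast]
    exact sum_antidiagonal_choose_mul_choose N n u v
  rw [← eval_L, ← eval_R, L_eq_R]

end BinomialConvolution

lemma sum_antidiagonal_choose_mul_eq_sum_range {R : Type*} [Semiring R] (f : ℕ → ℕ → R) (n : ℕ) :
    ∑ p ∈ antidiagonal n, p.1.choose p.2 * f p.1 p.2 =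
      ∑ k ∈ range (n / 2 + 1), (n - k).choose k * f (n - k) k := by
  rw [← Finset.Nat.sum_antidiagonal_swap, Finset.Nat.sum_antidiagonal_eq_sum_range_succ_mk]
  symm
  refine sum_subset (range_subset_range.2 (by omega)) fun k hk hk' => ?_
  simp only [mem_range] at hk hk'
  simp [Nat.choose_eq_zero_of_lt (show n - k < k by omega)]

lemma jacP_eq_sum_ringChoose (n : ℕ) (α β x : ℝ) :
    jacP n α β x = 2 ^ n * n.factorial / poch (n + α + β + 1) n *
      ∑ p ∈ antidiagonal n, (Ring.choose (n + β) p.1 * Ring.choose (n + α) p.2) *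
        (((x - 1) / 2) ^ p.1 * ((x + 1) / 2) ^ p.2) := by
  rw [jacP, Finset.Nat.sum_antidiagonal_eq_sum_range_succ_mk]
  congr 1
  refine sum_congr rfl fun s hs => ?_
  have hsn : s ≤ n := Nat.lt_succ_iff.1 (mem_range.1 hs)
  have hβ := prod_Icc_div_factorial_eq_ringChoose β (Nat.sub_le n s)
  rw [Nat.sub_sub_self hsn] at hβ
  rw [prod_Icc_div_factorial_eq_ringChoose α hsn, hβ]
  ring

lemma jacP_self_eq_sum (n : ℕ) (a x : ℝ) :
    jacP n a a x = 2 ^ n * n.factorial / poch (n + a + a + 1) n *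
      ∑ k ∈ range (n / 2 + 1), (n - k).choose k *
        (Ring.choose (n + a) (n - k) * (x ^ (n - 2 * k) * ((x ^ 2 - 1) / 4) ^ k)) := by
  rw [jacP_eq_sum_ringChoose, sum_antidiagonal_ringChoose_mul_ringChoose,
    show (x - 1) / 2 + (x + 1) / 2 = x by ring,
    show (x - 1) / 2 * ((x + 1) / 2) = (x ^ 2 - 1) / 4 by ring,
    sum_antidiagonal_choose_mul_eq_sum_range fun m k =>
      Ring.choose (n + a) m * (x ^ (m - k) * ((x ^ 2 - 1) / 4) ^ k)]
  simp only [Nat.sub_sub, ← two_mul]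

lemma tendsto_prod_add_mul_div_pow_card {ι : Type*} (s : Finset ι) (c : ι → ℝ) (d : ℝ) :
    Tendsto (fun α : ℝ => (∏ i ∈ s, (c i + d * α)) / α ^ #s) atTop (𝓝 (d ^ #s)) := by
  have hfactor (i : ι) : Tendsto (fun α : ℝ => (c i + d * α) / α) atTop (𝓝 d) := by
    have h : Tendsto (fun α : ℝ => c i / α + d) atTop (𝓝 (0 + d)) :=
      (tendsto_const_nhds.div_atTop tendsto_id).add_const d
    rw [zero_add] at h
    refine h.congr' ?_
    filter_upwards [eventually_ne_atTop 0] with α hα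
    field_simp
  simpa only [prod_div_distrib, prod_const] using tendsto_finsetProd s fun i _ => hfactor i

lemma tendsto_poch_add_mul_div_pow (c d : ℝ) (m : ℕ) :
    Tendsto (fun α : ℝ => poch (c + d * α) m / α ^ m) atTop (𝓝 (d ^ m)) := by
  have h := tendsto_prod_add_mul_div_pow_card (range m) (fun j => c + j) d
  simpa only [card_range, poch, add_right_comm] using h

lemma tendsto_ringChoose_add_mul_div_pow (c d : ℝ) (m : ℕ) :
    Tendsto (fun α : ℝ => Ring.choose (c + d * α) m / α ^ m) atTop (𝓝 (d ^ m / m.factorial)) := by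
  have h := (tendsto_prod_add_mul_div_pow_card (range m) (fun j => c - j) d).div_const
    (m.factorial : ℝ)
  simpa only [card_range, ringChoose_eq_prod_div_factorial, div_right_comm, sub_add_eq_add_sub]
    using h

lemma rpow_half_mul_div_sqrt_pow {α : ℝ} (hα : 0 < α) (x : ℝ) {n k : ℕ} (hk : 2 * k ≤ n) :
    α ^ ((n : ℝ) / 2) * (x / √α) ^ (n - 2 * k) = α ^ k * x ^ (n - 2 * k) := by
  obtain ⟨m, rfl⟩ := Nat.exists_eq_add_of_le' hk
  have hsqrt : √α ≠ 0 := (Real.sqrt_pos.2 hα).ne'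
  rw [Real.rpow_div_two_eq_sqrt _ hα.le, Real.rpow_natCast, Nat.add_sub_cancel, pow_add, pow_mul,
    Real.sq_sqrt hα.le, mul_right_comm, ← mul_pow, mul_div_cancel₀ x hsqrt, mul_comm]

lemma rpow_half_mul_jacP_neg_div_sqrt {α : ℝ} (hα : 0 < α) (n : ℕ) (x : ℝ) :
    α ^ ((n : ℝ) / 2) * jacP n (-α) (-α) (x / √α) =
      2 ^ n * n.factorial / (poch (n + 1 + -2 * α) n / α ^ n) *
        ∑ k ∈ range (n / 2 + 1), (n - k).choose k *
          (Ring.choose (n + -1 * α) (n - k) / α ^ (n - k) *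
            (x ^ (n - 2 * k) * ((x ^ 2 / α - 1) / 4) ^ k)) := by
  rw [jacP_self_eq_sum, mul_sum, mul_sum, mul_sum, neg_eq_neg_one_mul α,
    show (n : ℝ) + -1 * α + -1 * α + 1 = n + 1 + -2 * α by ring]
  refine sum_congr rfl fun k hk => ?_
  have hkn : 2 * k ≤ n := by
    rw [mem_range] at hk
    omega
  have hpow : α ^ n / α ^ (n - k) = α ^ k := by
    rw [div_eq_iff (by positivity), ← pow_add]
    congr 1
    omega
  have hscale := rpow_half_mul_div_sqrt_pow hα x hkn
  rw [← hpow] at hscale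
  rw [div_pow x _ 2, Real.sq_sqrt hα.le, div_div_eq_mul_div]
  linear_combination (2 ^ n * n.factorial / poch (n + 1 + -2 * α) n * ((n - k).choose k *
    (Ring.choose (n + -1 * α) (n - k) * ((x ^ 2 / α - 1) / 4) ^ k))) * hscale

lemma jacobi_limit_coeff_eq_hermite_coeff {n k : ℕ} (hk : 2 * k ≤ n) :
    2 ^ n * n.factorial / (-2) ^ n * ((n - k).choose k *
        ((-1) ^ (n - k) / (n - k).factorial * (-1 / 4) ^ k)) =
      (n.factorial : ℝ) / (k.factorial * (n - 2 * k).factorial * 4 ^ k) := by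
  obtain ⟨m, rfl⟩ := Nat.exists_eq_add_of_le' hk
  rw [Nat.cast_choose ℝ (by omega), Nat.add_sub_cancel, show m + 2 * k - k = m + k by omega,
    Nat.add_sub_cancel, div_pow, neg_pow 2]
  have hsign : (-1 : ℝ) ^ (m + 2 * k) = (-1) ^ (m + k) * (-1) ^ k := by
    rw [← pow_add]
    congr 1
    omega
  rw [hsign]
  field_simp

lemma neg_I_pow_mul_hermC_I_mul (n : ℕ) (z : ℂ) :
    (-Complex.I) ^ n * hermC n (Complex.I * z) =
      ∑ k ∈ range (n / 2 + 1), (n.factorial : ℂ) /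
        (k.factorial * (n - 2 * k).factorial * 4 ^ k) * z ^ (n - 2 * k) := by
  rw [hermC, mul_sum]
  refine sum_congr rfl fun k hk => ?_
  rw [mem_range] at hk
  obtain ⟨m, rfl⟩ := Nat.exists_eq_add_of_le' (show 2 * k ≤ n by omega)
  have hphase : (-Complex.I) ^ (m + 2 * k) * (-1) ^ k * Complex.I ^ m = 1 := by
    calc
      _ = (-Complex.I * Complex.I) ^ m * ((-Complex.I) ^ 2 * -1) ^ k := by
        rw [pow_add, pow_mul, mul_pow, mul_pow]
        ring
      _ = 1 := by simp
  rw [Nat.add_sub_cancel, mul_pow]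
  linear_combination ((m + 2 * k).factorial / (k.factorial * m.factorial * 4 ^ k) * z ^ m) * hphase

theorem stmt17 (n : ℕ) (x : ℝ) :
    Filter.Tendsto (fun α : ℝ => α ^ ((n : ℝ) / 2) * jacP n (-α) (-α) (x / Real.sqrt α))
        Filter.atTop
        (nhds (∑ k ∈ Finset.range (n / 2 + 1),
          (n.factorial : ℝ) / ((k.factorial : ℝ) * ((n - 2 * k).factorial : ℝ) * 4 ^ k)
            * x ^ (n - 2 * k))) ∧
      ((∑ k ∈ Finset.range (n / 2 + 1),
          (n.factorial : ℝ) / ((k.factorial : ℝ) * ((n - 2 * k).factorial : ℝ) * 4 ^ k)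
            * x ^ (n - 2 * k) : ℝ) : ℂ)
        = (-Complex.I) ^ n * hermC n (Complex.I * x) := by
  constructor
  · have hquad : Tendsto (fun α : ℝ => (x ^ 2 / α - 1) / 4) atTop (𝓝 ((0 - 1) / 4)) :=
      ((tendsto_const_nhds.div_atTop tendsto_id).sub_const 1).div_const 4
    have hprefactor := (tendsto_const_nhds (x := (2 ^ n * n.factorial : ℝ))).div
      (tendsto_poch_add_mul_div_pow (n + 1) (-2) n) (by simp)
    have hsum := tendsto_finsetSum (range (n / 2 + 1)) fun k _ =>
      ((tendsto_ringChoose_add_mul_div_pow n (-1) (n - k)).mul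
        ((hquad.pow k).const_mul (x ^ (n - 2 * k)))).const_mul ((n - k).choose k : ℝ)
    convert (hprefactor.mul hsum).congr' ?_ using 2
    · rw [mul_sum]
      refine sum_congr rfl fun k hk => ?_
      rw [mem_range] at hk
      rw [← jacobi_limit_coeff_eq_hermite_coeff (by omega)]
      ring
    · filter_upwards [eventually_gt_atTop 0] with α hα
      exact (rpow_half_mul_jacP_neg_div_sqrt hα n x).symm
  · rw [neg_I_pow_mul_hermC_I_mul]
    push_cast
    rfl
end
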